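/- If G is a connected claw-free finite simple graph of order n ≥ 2 that is not isomorphic to the path P₃ on three vertices, then Ψ⁻_g(G) ≥ n/2, i.e., 2·Ψ⁻_g(G) ≥ n. -/

import Mathlib

namespace EnclavelessGame

variable {V : Type*} [Fintype V] [DecidableEq V]

/-- `v` is an enclave of `S` if `v ∈ S` and its closed neighborhood `N[v]` is contained in `S`. -/
def IsEnclave (G : SimpleGraph V) (S : Finset V) (v : V) : Prop :=
  v ∈ S ∧ ∀ u, G.Adj v u → u ∈ S

/-- `S` is enclaveless if it contains no enclave. -/
def IsEnclaveless (G : SimpleGraph V) (S : Finset V) : Prop :=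
  ∀ v, ¬ IsEnclave G S v

instance (G : SimpleGraph V) [DecidableRel G.Adj] (S : Finset V) :
    Decidable (IsEnclaveless G S) := by
  unfold IsEnclaveless IsEnclave
  infer_instance

/-- `D` is a dominating set: every vertex lies in the closed neighborhood
of some vertex of `D`. -/
def IsDominating (G : SimpleGraph V) (D : Finset V) : Prop :=
  ∀ v, ∃ u ∈ D, u = v ∨ G.Adj u v

/-- `D` is a minimal dominating set (minimal with respect to set inclusion). -/
def IsMinimalDominating (G : SimpleGraph V) (D : Finset V) : Prop :=
  IsDominating G D ∧ ∀ D' ⊆ D, IsDominating G D' → D' = D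

/-- `S` is a maximal enclaveless set (maximal with respect to set inclusion). -/
def IsMaximalEnclaveless (G : SimpleGraph V) (S : Finset V) : Prop :=
  IsEnclaveless G S ∧ ∀ T, S ⊆ T → IsEnclaveless G T → T = S

/-- The domination number `γ(G)`: minimum cardinality of a dominating set. -/
noncomputable def domNum (G : SimpleGraph V) : ℕ :=
  sInf {k | ∃ D : Finset V, IsDominating G D ∧ D.card = k}

/-- The upper domination number `Γ(G)`: maximum cardinality of a minimal dominating set. -/
noncomputable def upperDomNum (G : SimpleGraph V) : ℕ :=
  sSup {k | ∃ D : Finset V, IsMinimalDominating G D ∧ D.card = k}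

/-- The enclaveless number `Ψ(G)`: maximum cardinality of an enclaveless set. -/
noncomputable def enclavelessNum (G : SimpleGraph V) : ℕ :=
  sSup {k | ∃ S : Finset V, IsEnclaveless G S ∧ S.card = k}

/-- The lower enclaveless number `ψ(G)`: minimum cardinality of a maximal enclaveless set. -/
noncomputable def lowerEnclavelessNum (G : SimpleGraph V) : ℕ :=
  sInf {k | ∃ S : Finset V, IsMaximalEnclaveless G S ∧ S.card = k}

/-- The set of playable vertices given the set `S` of already chosen vertices:
vertices `v ∉ S` such that `S ∪ {v}` is enclaveless. -/
def playableSet (G : SimpleGraph V) [DecidableRel G.Adj] (S : Finset V) : Finset V :=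
  Finset.univ.filter (fun v => v ∉ S ∧ IsEnclaveless G (insert v S))

/-- The value of the competition-enclaveless game from position `S`: `maxTurn = true`
means it is Maximizer's turn (this computes `MaxVal S`), and `maxTurn = false` means it
is Minimizer's turn (this computes `MinVal S`). If no vertex is playable the value is
`|S|`; otherwise it is the max (resp. min) over playable `v` of the value of
`S ∪ {v}` with the turn switched. -/
def gameVal (G : SimpleGraph V) [DecidableRel G.Adj] (maxTurn : Bool) (S : Finset V) : ℕ :=
  if h : (playableSet G S).Nonempty then
    if maxTurn then
      (playableSet G S).attach.sup' (by simpa using h)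
        (fun v => gameVal G false (insert v.1 S))
    else
      (playableSet G S).attach.inf' (by simpa using h)
        (fun v => gameVal G true (insert v.1 S))
  else S.card
termination_by Sᶜ.card
decreasing_by
  all_goals
    have hv := v.2
    simp only [playableSet, Finset.mem_filter] at hv
    rw [Finset.compl_insert]
    exact Finset.card_erase_lt_of_mem (Finset.mem_compl.mpr hv.2.1)

/-- The Maximizer-start enclaveless game number `Ψ⁺_g(G) = MaxVal ∅`. -/
def maxStartGameNum (G : SimpleGraph V) [DecidableRel G.Adj] : ℕ := gameVal G true ∅

/-- The Minimizer-start enclaveless game number `Ψ⁻_g(G) = MinVal ∅`. -/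
def minStartGameNum (G : SimpleGraph V) [DecidableRel G.Adj] : ℕ := gameVal G false ∅

/-- `G` is claw-free: it contains no induced `K_{1,3}`, i.e. no vertex has three
pairwise non-adjacent neighbors. -/
def ClawFree (G : SimpleGraph V) : Prop :=
  ¬ ∃ (v : V) (T : Finset V), T.card = 3 ∧ (∀ u ∈ T, G.Adj v u) ∧
      ∀ a ∈ T, ∀ b ∈ T, a ≠ b → ¬ G.Adj a b


lemma exists_step {V : Type*} (G : SimpleGraph V) (hconn : G.Connected) {b r : V} (h : b ≠ r) :
    ∃ q, G.Adj b q ∧ G.dist b r = G.dist q r + 1 := by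
  obtain ⟨p, hp⟩ := (hconn b r).exists_walk_length_eq_dist
  cases p with
  | nil => exact absurd rfl h
  | @cons _ q _ hbq p =>
    refine ⟨q, hbq, ?_⟩
    have h1 : G.dist q r ≤ p.length := SimpleGraph.dist_le p
    have h2 := hconn.dist_triangle (u := b) (v := q) (w := r)
    have h3 : G.dist b q = 1 := SimpleGraph.dist_eq_one_iff_adj.mpr hbq
    simp only [SimpleGraph.Walk.length_cons] at hp
    omega

lemma claw_elim {V : Type*} [Fintype V] [DecidableEq V] {G : SimpleGraph V} (hclaw : ClawFree G)
    {v a b c : V} (ha : G.Adj v a) (hb : G.Adj v b) (hc : G.Adj v c)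
    (hab : a ≠ b) (hac : a ≠ c) (hbc : b ≠ c)
    (nab : ¬ G.Adj a b) (nac : ¬ G.Adj a c) (nbc : ¬ G.Adj b c) : False := by
  have nba : ¬ G.Adj b a := fun h => nab h.symm
  have nca : ¬ G.Adj c a := fun h => nac h.symm
  have ncb : ¬ G.Adj c b := fun h => nbc h.symm
  refine hclaw ⟨v, {a, b, c}, Finset.card_eq_three.mpr ⟨a, b, c, hab, hac, hbc, rfl⟩, ?_, ?_⟩
  · intro u hu
    simp only [Finset.mem_insert, Finset.mem_singleton] at hu
    rcases hu with rfl | rfl | rfl <;> assumption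
  · intro x hx y hy hxy
    simp only [Finset.mem_insert, Finset.mem_singleton] at hx hy
    rcases hx with rfl | rfl | rfl <;> rcases hy with rfl | rfl | rfl <;>
      first | assumption | exact absurd rfl hxy

/-- Mapping each vertex of the independent set `B` one step towards `r` is injective. -/
lemma card_erase_le {V : Type*} [Fintype V] [DecidableEq V] (G : SimpleGraph V)
    (hconn : G.Connected) (hclaw : ClawFree G) (B Q : Finset V) (r : V)
    (hind : ∀ b ∈ B, ∀ b' ∈ B, ¬ G.Adj b b')
    (hQ : ∀ b ∈ B, ∀ q, G.Adj b q → q ∈ Q)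
    (hr : ∀ b ∈ B, ∀ b' ∈ B, G.Adj r b → G.Adj r b' → b = b') :
    (B.erase r).card ≤ Q.card := by
  have hex : ∀ b : V, ∃ q, b ≠ r → G.Adj b q ∧ G.dist b r = G.dist q r + 1 := by
    intro b
    by_cases h : b = r
    · exact ⟨b, fun h' => absurd h h'⟩
    · obtain ⟨q, hq⟩ := exists_step G hconn h
      exact ⟨q, fun _ => hq⟩
  choose f hf using hex
  refine Finset.card_le_card_of_injOn f ?_ ?_
  · intro b hb
    have hb' := Finset.mem_erase.mp hb
    exact hQ b hb'.2 _ (hf b hb'.1).1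
  · intro b hb b' hb' hEq
    have hb := Finset.mem_erase.mp hb
    have hb' := Finset.mem_erase.mp hb'
    obtain ⟨h1, h2⟩ := hf b hb.1
    obtain ⟨h3, h4⟩ := hf b' hb'.1
    rw [← hEq] at h3 h4
    by_contra hne
    by_cases hq : f b = r
    · rw [hq] at h1 h3
      exact hne (hr b hb.2 b' hb'.2 h1.symm h3.symm)
    · obtain ⟨w, hw1, hw2⟩ := exists_step G hconn hq
      have key : ∀ x, G.dist x r = G.dist (f b) r + 1 → x ≠ w ∧ ¬ G.Adj x w := by
        intro x hx
        constructor
        · rintro rfl; omega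
        · intro hadj
          have h5 := hconn.dist_triangle (u := x) (v := w) (w := r)
          have h6 : G.dist x w = 1 := SimpleGraph.dist_eq_one_iff_adj.mpr hadj
          omega
      exact claw_elim hclaw h1.symm h3.symm hw1 hne (key b h2).1 (key b' h4).1
        (hind b hb.2 b' hb'.2) (key b h2).2 (key b' h4).2

lemma terminal_lemma {V : Type*} [Fintype V] [DecidableEq V]
    (G : SimpleGraph V) [DecidableRel G.Adj]
    (hconn : G.Connected) (hclaw : ClawFree G) (S : Finset V)
    (hS : IsEnclaveless G S) (hmax : ¬ (playableSet G S).Nonempty) :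
    Fintype.card V ≤ 2 * S.card ∨
    (Fintype.card V = 2 * S.card + 1 ∧
      (∀ w ∈ S, ((Sᶜ).filter (fun v => G.Adj w v)).card = 2) ∧
      ∀ v, v ∉ S → ∀ u, G.Adj v u → u ∈ S) := by
  classical
  -- basic facts
  have hdom : ∀ w ∈ S, ∃ v, v ∉ S ∧ G.Adj w v := by
    intro w hw
    by_contra hcon
    push Not at hcon
    exact hS w ⟨hw, fun u hu => by by_contra hu'; exact hcon u hu' hu⟩
  have hpriv : ∀ v, v ∉ S → (∀ u, G.Adj v u → u ∈ S) ∨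
      ∃ w ∈ S, G.Adj w v ∧ ∀ x, G.Adj w x → x ∉ S → x = v := by
    intro v hv
    have h1 : v ∉ playableSet G S := fun h => hmax ⟨v, h⟩
    have h2 : ¬ IsEnclaveless G (insert v S) := by
      intro h; exact h1 (by simp [playableSet, hv, h])
    unfold IsEnclaveless at h2
    push Not at h2
    obtain ⟨w, hw, hw2⟩ := h2
    rcases Finset.mem_insert.mp hw with rfl | hw
    · left
      intro u hu
      rcases Finset.mem_insert.mp (hw2 u hu) with rfl | h
      · exact absurd hu (G.irrefl)
      · exact h
    · right
      obtain ⟨x, hx, hwx⟩ := hdom w hw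
      have h3 : ∀ x, G.Adj w x → x ∉ S → x = v := by
        intro x hx hxS
        rcases Finset.mem_insert.mp (hw2 x hx) with h | h
        · exact h
        · exact absurd h hxS
      refine ⟨w, hw, ?_, h3⟩
      rw [← h3 x hwx hx]; exact hwx
  set A := (Sᶜ).filter (fun v => ∃ w ∈ S, G.Adj w v ∧ ∀ x, G.Adj w x → x ∉ S → x = v) with hA
  set B := (Sᶜ).filter (fun v => ¬ ∃ w ∈ S, G.Adj w v ∧ ∀ x, G.Adj w x → x ∉ S → x = v) with hB
  set P := S.filter (fun w => ∃ v, ∀ x, G.Adj w x → x ∉ S → x = v) with hP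
  set Q := S.filter (fun w => ¬ ∃ v, ∀ x, G.Adj w x → x ∉ S → x = v) with hQ
  have cD : A.card + B.card = (Sᶜ).card := Finset.card_filter_add_card_filter_not _
  have cS : P.card + Q.card = S.card := Finset.card_filter_add_card_filter_not _
  have cV : S.card + (Sᶜ).card = Fintype.card V := Finset.card_add_card_compl S
  have hAP : A.card ≤ P.card := by
    have : ∀ v, ∃ w, v ∈ A → w ∈ P ∧ G.Adj w v ∧ ∀ x, G.Adj w x → x ∉ S → x = v := by
      intro v
      by_cases hv : v ∈ A
      · obtain ⟨w, hw, h1, h2⟩ := (Finset.mem_filter.mp hv).2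
        exact ⟨w, fun _ => ⟨Finset.mem_filter.mpr ⟨hw, v, h2⟩, h1, h2⟩⟩
      · exact ⟨v, fun h => absurd h hv⟩
    choose g hg using this
    refine Finset.card_le_card_of_injOn g (fun v hv => (hg v hv).1) ?_
    intro v hv v' hv' hEq
    have h1 := (hg v' hv').2.2 v (hEq ▸ (hg v hv).2.1)
      (Finset.mem_compl.mp (Finset.mem_filter.mp hv).1)
    exact h1
  have hBS : ∀ b ∈ B, ∀ u, G.Adj b u → u ∈ S := by
    intro b hb
    obtain ⟨h1, h2⟩ := Finset.mem_filter.mp hb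
    exact (hpriv b (Finset.mem_compl.mp h1)).resolve_right h2
  have hBn : ∀ b ∈ B, b ∉ S := fun b hb => Finset.mem_compl.mp (Finset.mem_filter.mp hb).1
  have hBQ : ∀ b ∈ B, ∀ q, G.Adj b q → q ∈ Q := by
    intro b hb q hq
    refine Finset.mem_filter.mpr ⟨hBS b hb q hq, ?_⟩
    rintro ⟨v, hv⟩
    have : b = v := hv b hq.symm (hBn b hb)
    subst this
    exact (Finset.mem_filter.mp hb).2 ⟨q, hBS b hb q hq, hq.symm, hv⟩
  have hind : ∀ b ∈ B, ∀ b' ∈ B, ¬ G.Adj b b' := fun b hb b' hb' h =>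
    hBn b' hb' (hBS b hb b' h)
  by_cases hroot : ∃ r, r ∉ B ∧ ∀ b ∈ B, ∀ b' ∈ B, G.Adj r b → G.Adj r b' → b = b'
  · obtain ⟨r, hr1, hr2⟩ := hroot
    have := card_erase_le G hconn hclaw B Q r hind hBQ hr2
    rw [Finset.erase_eq_of_notMem hr1] at this
    left; omega
  · push Not at hroot
    have hDB : ∀ v, v ∉ S → v ∈ B := by
      intro v hv
      by_contra hvB
      obtain ⟨b, hb, b', hb', h1, h2, h3⟩ := hroot v hvB
      exact hv (hBS b hb v h1.symm)
    have hBr : B.card ≤ Q.card + 1 := by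
      rcases B.eq_empty_or_nonempty with h | ⟨r, hr⟩
      · simp [h]
      · have h1 := card_erase_le G hconn hclaw B Q r hind hBQ
          (fun b hb b' hb' h => absurd h (hind r hr b hb))
        rw [Finset.card_erase_of_mem hr] at h1
        omega
    by_cases hle : Fintype.card V ≤ 2 * S.card
    · exact Or.inl hle
    · right
      refine ⟨by omega, ?_, fun v hv => hBS v (hDB v hv)⟩
      intro w hw
      obtain ⟨b, hb, b', hb', h1, h2, h3⟩ := hroot w (fun h => hBn w h hw)
      refine Finset.card_eq_two.mpr ⟨b, b', h3, ?_⟩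
      ext x
      simp only [Finset.mem_filter, Finset.mem_compl, Finset.mem_insert, Finset.mem_singleton]
      constructor
      · rintro ⟨hxS, hwx⟩
        by_contra hcon
        push Not at hcon
        have hx := hDB x hxS
        exact claw_elim hclaw h1 h2 hwx h3 hcon.1.symm hcon.2.symm
          (hind b hb b' hb') (hind b hb x hx) (hind b' hb' x hx)
      · rintro (rfl | rfl)
        · exact ⟨hBn _ hb, h1⟩
        · exact ⟨hBn _ hb', h2⟩

lemma game_lemma {V : Type*} [Fintype V] [DecidableEq V]
    (G : SimpleGraph V) [DecidableRel G.Adj] (N : ℕ) (k : ℕ) : ∀ (b : Bool) (S : Finset V),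
    (Sᶜ).card = k → IsEnclaveless G S →
    (∀ T, S ⊆ T → IsEnclaveless G T → ¬ (playableSet G T).Nonempty → N ≤ 2 * T.card) →
    N ≤ 2 * gameVal G b S := by
  induction k using Nat.strong_induction_on with
  | _ k ih =>
    intro b S hk hS hT
    have step : ∀ (b' : Bool) (v : V), v ∈ playableSet G S → N ≤ 2 * gameVal G b' (insert v S) := by
      intro b' v hv
      simp only [playableSet, Finset.mem_filter, Finset.mem_univ, true_and] at hv
      refine ih _ ?_ b' _ rfl hv.2 (fun T h => hT T ((Finset.subset_insert _ _).trans h))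
      rw [← hk, Finset.compl_insert]
      exact Finset.card_erase_lt_of_mem (Finset.mem_compl.mpr hv.1)
    rw [gameVal]
    split_ifs with h hb
    · obtain ⟨v, hv⟩ := h
      have h1 := Finset.le_sup' (fun v : {x // x ∈ playableSet G S} =>
        gameVal G false (insert v.1 S)) (Finset.mem_attach _ ⟨v, hv⟩)
      have h2 := step false v hv
      simp only at h1
      omega
    · obtain ⟨v, hv, hE⟩ := Finset.exists_mem_eq_inf' (s := (playableSet G S).attach)
        (by simpa using h) (fun v => gameVal G true (insert v.1 S))
      rw [hE]
      exact step true v.1 v.2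
    · exact hT S subset_rfl hS h

/-- A bad terminal position forces two leaves with distinct neighbours, or `P₃`. -/
lemma two_leaves {V : Type*} [Fintype V] [DecidableEq V]
    (G : SimpleGraph V) [DecidableRel G.Adj]
    (hconn : G.Connected) (hclaw : ClawFree G) (hn : 2 ≤ Fintype.card V)
    (hP3 : ¬ Nonempty (G ≃g SimpleGraph.pathGraph 3)) (S : Finset V)
    (h1 : Fintype.card V = 2 * S.card + 1)
    (h2 : ∀ w ∈ S, ((Sᶜ).filter (fun v => G.Adj w v)).card = 2)
    (h3 : ∀ v, v ∉ S → ∀ u, G.Adj v u → u ∈ S) :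
    ∃ d d' u u', d ≠ d' ∧ u ≠ u' ∧ G.Adj d u ∧ G.Adj d' u' ∧ (∀ x, G.Adj d x → x = u) ∧
      (∀ x, G.Adj d' x → x = u') := by
  classical
  have cV : S.card + (Sᶜ).card = Fintype.card V := Finset.card_add_card_compl S
  have hcount : ∑ v ∈ Sᶜ, (S.filter (fun w => G.Adj w v)).card = 2 * S.card := by
    have := Finset.sum_card_bipartiteAbove_eq_sum_card_bipartiteBelow
      (s := S) (t := Sᶜ) (fun w v => G.Adj w v)
    unfold Finset.bipartiteAbove Finset.bipartiteBelow at this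
    rw [← this, Finset.sum_congr rfl h2]
    simp [mul_comm]
  have hpos : ∀ v ∈ Sᶜ, 1 ≤ (S.filter (fun w => G.Adj w v)).card := by
    intro v hv
    have : Nontrivial V := Fintype.one_lt_card_iff_nontrivial.mp (by omega)
    obtain ⟨u, hu⟩ := exists_ne v
    obtain ⟨q, hq, -⟩ := exists_step G hconn hu.symm
    exact Finset.card_pos.mpr ⟨q, Finset.mem_filter.mpr
      ⟨h3 v (Finset.mem_compl.mp hv) q hq, hq.symm⟩⟩
  set L := (Sᶜ).filter (fun v => (S.filter (fun w => G.Adj w v)).card = 1) with hL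
  have hL2 : 1 < L.card := by
    have h4 : ∑ v ∈ Sᶜ, 2 ≤ ∑ v ∈ Sᶜ, ((S.filter (fun w => G.Adj w v)).card +
        if (S.filter (fun w => G.Adj w v)).card = 1 then 1 else 0) := by
      refine Finset.sum_le_sum (fun v hv => ?_)
      have := hpos v hv
      split_ifs <;> omega
    have hLc : L.card = ∑ v ∈ Sᶜ,
        if (S.filter (fun w => G.Adj w v)).card = 1 then 1 else 0 := Finset.card_filter _ _
    rw [Finset.sum_add_distrib, hcount, ← hLc, Finset.sum_const] at h4
    simp only [smul_eq_mul] at h4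
    omega
  have hleaf : ∀ d ∈ L, ∃ u, G.Adj d u ∧ ∀ x, G.Adj d x → x = u := by
    intro d hd
    obtain ⟨hd1, hd2⟩ := Finset.mem_filter.mp hd
    obtain ⟨u, hu⟩ := Finset.card_eq_one.mp hd2
    have h5 : ∀ x, G.Adj d x ↔ x = u := by
      intro x
      rw [← Finset.mem_singleton, ← hu, Finset.mem_filter]
      exact ⟨fun h => ⟨h3 d (Finset.mem_compl.mp hd1) x h, h.symm⟩, fun h => h.2.symm⟩
    exact ⟨u, (h5 u).mpr rfl, fun x => (h5 x).mp⟩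
  obtain ⟨d, hd, d', hd', hne⟩ := Finset.one_lt_card.mp hL2
  obtain ⟨u, hu1, hu2⟩ := hleaf d hd
  obtain ⟨u', hu1', hu2'⟩ := hleaf d' hd'
  refine ⟨d, d', u, u', hne, ?_, hu1, hu1', hu2, hu2'⟩
  rintro rfl
  have nbr : ∀ x, G.Adj u x → x = d ∨ x = d' := by
    intro x hx
    by_contra hcon
    push Not at hcon
    refine claw_elim hclaw hu1.symm hu1'.symm hx hne hcon.1.symm hcon.2.symm ?_ ?_ ?_
    · intro h; have := hu2 _ h; subst this; exact G.irrefl hu1'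
    · intro h; have := hu2 _ h; subst this; exact G.irrefl hx
    · intro h; have := hu2' _ h; subst this; exact G.irrefl hx
  have hall : ∀ x, x = d ∨ x = u ∨ x = d' := by
    suffices ∀ n, ∀ x, G.dist x u = n → x = d ∨ x = u ∨ x = d' from fun x => this _ x rfl
    intro n
    induction n with
    | zero =>
      intro x hx
      exact Or.inr (Or.inl (hconn.dist_eq_zero_iff.mp hx))
    | succ n ih =>
      intro x hx
      by_cases hxu : x = u
      · exact Or.inr (Or.inl hxu)
      obtain ⟨q, hq, hq2⟩ := exists_step G hconn hxu
      rcases ih q (by omega) with rfl | rfl | rfl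
      · exact Or.inr (Or.inl (hu2 x hq.symm))
      · rcases nbr x hq.symm with h | h <;> simp [h]
      · exact Or.inr (Or.inl (hu2' x hq.symm))
  apply hP3
  have ndd : ¬ G.Adj d d' := by
    intro h; have := hu2 _ h; subst this; exact G.irrefl hu1'
  have ndd' : ¬ G.Adj d' d := fun h => ndd h.symm
  have hbij : Function.Bijective (![d, u, d'] : Fin 3 → V) := by
    constructor
    · intro i j hij
      have e1 := hu1.ne
      have e2 := hu1'.ne
      fin_cases i <;> fin_cases j <;> simp_all [eq_comm]
    · intro x
      rcases hall x with h | h | h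
      · exact ⟨0, h.symm⟩
      · exact ⟨1, h.symm⟩
      · exact ⟨2, h.symm⟩
  refine ⟨(SimpleGraph.Iso.symm ⟨Equiv.ofBijective _ hbij, ?_⟩)⟩
  intro i j
  have hu1s := hu1.symm
  have hu1s' := hu1'.symm
  fin_cases i <;> fin_cases j <;>
    simp [SimpleGraph.pathGraph_adj, ndd, ndd', hu1, hu1', hu1s', hu1s]

/-- If `G` is a connected claw-free finite simple graph of order `n ≥ 2` that is not
isomorphic to the path `P₃` on three vertices, then `Ψ⁻_g(G) ≥ n/2`, i.e.
`2·Ψ⁻_g(G) ≥ n`. -/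
theorem clawFree_minStartGameNum_ge {V : Type*} [Fintype V] [DecidableEq V]
    (G : SimpleGraph V) [DecidableRel G.Adj]
    (hconn : G.Connected) (hclaw : ClawFree G) (hn : 2 ≤ Fintype.card V)
    (hP3 : ¬ Nonempty (G ≃g SimpleGraph.pathGraph 3)) :
    Fintype.card V ≤ 2 * minStartGameNum G := by
  have base : IsEnclaveless G (∅ : Finset V) := fun v h => by simpa using h.1
  by_cases hbad : ∃ S : Finset V, IsEnclaveless G S ∧ ¬ (playableSet G S).Nonempty ∧
      ¬ Fintype.card V ≤ 2 * S.card
  swap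
  · push Not at hbad
    refine game_lemma G _ _ false ∅ rfl base (fun T _ h1 h2 => hbad T h1 ?_)
    simpa [Finset.not_nonempty_iff_eq_empty] using h2
  obtain ⟨S, hS1, hS2, hS3⟩ := hbad
  obtain ⟨h1, h2, h3⟩ := (terminal_lemma G hconn hclaw S hS1 hS2).resolve_left hS3
  obtain ⟨d, d', u, u', hdd, huu, hdu, hdu', hd, hd'⟩ :=
    two_leaves G hconn hclaw hn hP3 S h1 h2 h3
  -- positions containing a leaf are fine for Maximizer
  have leaf : ∀ (b : Bool) (T : Finset V) (e w : V), e ∈ T → IsEnclaveless G T →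
      (∀ x, G.Adj e x → x = w) → Fintype.card V ≤ 2 * gameVal G b T := by
    intro b T e w he hT hw
    refine game_lemma G _ _ b T rfl hT (fun R hTR hR hR2 => ?_)
    rcases terminal_lemma G hconn hclaw R hR hR2 with h | ⟨-, h, -⟩
    · exact h
    · have h5 := h e (hTR he)
      have h6 : ((Rᶜ).filter (fun v => G.Adj e v)) ⊆ {w} := by
        intro x hx
        exact Finset.mem_singleton.mpr (hw x (Finset.mem_filter.mp hx).2)
      have := Finset.card_le_card h6
      simp only [Finset.card_singleton] at this
      omega
  -- playing a leaf whose neighbour was not played, as second move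
  have move : ∀ (v e w : V), v ≠ w → e ≠ v → G.Adj e w → (∀ x, G.Adj e x → x = w) →
      IsEnclaveless G {v} → Fintype.card V ≤ 2 * gameVal G true {v} := by
    intro v e w hvw hev hew hw hv
    have hen : IsEnclaveless G (insert e {v}) := by
      rintro x ⟨hx, hx2⟩
      have hwe := hew.ne
      rcases Finset.mem_insert.mp hx with rfl | hx
      · have := hx2 w hew
        simp only [Finset.mem_insert, Finset.mem_singleton] at this
        rcases this with h | h
        · exact hwe h.symm
        · exact hvw h.symm
      · have hx := Finset.mem_singleton.mp hx
        subst hx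
        refine hv x ⟨by simp, fun y hy => ?_⟩
        have := hx2 y hy
        rcases Finset.mem_insert.mp this with rfl | h
        · exact absurd (hw x hy.symm) hvw
        · exact h
    have hmem : e ∈ playableSet G {v} := by simp [playableSet, hev, hen]
    have h5 := leaf false (insert e {v}) e w (by simp) hen hw
    rw [gameVal]
    rw [dif_pos ⟨e, hmem⟩, if_pos rfl]
    have h6 := Finset.le_sup' (fun v' : {x // x ∈ playableSet G {v}} =>
        gameVal G false (insert v'.1 {v})) (Finset.mem_attach _ ⟨e, hmem⟩)
    simp only at h6
    omega
  have resp : ∀ v, IsEnclaveless G {v} → Fintype.card V ≤ 2 * gameVal G true {v} := by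
    intro v hv
    by_cases e1 : v = d
    · exact leaf true {v} d u (by simp [e1]) hv hd
    by_cases e2 : v = d'
    · exact leaf true {v} d' u' (by simp [e2]) hv hd'
    by_cases e3 : v = u
    · exact move v d' u' (e3 ▸ huu) (Ne.symm e2) hdu' hd' hv
    · exact move v d u e3 (Ne.symm e1) hdu hd hv
  have hne : (playableSet G (∅ : Finset V)).Nonempty := by
    refine ⟨d, ?_⟩
    simp only [playableSet, Finset.mem_filter, Finset.mem_univ, true_and]
    refine ⟨by simp, ?_⟩
    rintro x ⟨hx, hx2⟩
    have hx : x = d := by simpa using hx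
    subst hx
    have : u = x := by simpa using hx2 u hdu
    exact hdu.ne this.symm
  unfold minStartGameNum
  rw [gameVal, dif_pos hne, if_neg (by simp)]
  obtain ⟨v, hv, hE⟩ := Finset.exists_mem_eq_inf' (s := (playableSet G (∅ : Finset V)).attach)
    (by simpa using hne) (fun v => gameVal G true (insert v.1 ∅))
  rw [hE]
  have hv2 := v.2
  simp only [playableSet, Finset.mem_filter, Finset.mem_univ, true_and] at hv2
  exact resp v.1 hv2.2

end EnclavelessGame
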